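/- Let Θ be the set of ALL time-inhomogeneous tabular environments on a state space S with |S| = S̄ states, action space A with |A| = Ā actions and horizon H (i.e., all tuples of transition kernels P_h : S × A → Δ(S) and mean rewards r_h : S × A → [0,1]), with fixed initial state s₁ and a choice E ↦ π*_E of optimal policies. Then for every ε ∈ (0,1], Θ admits a layered ε-value partition with at most (16 S̄ H² / ε)^{S̄² Ā H} · (4H/ε)^{S̄ Ā H} classes. -/

import Mathlib

open Finset

/-- A tabular environment: a pair of (time-indexed) transition kernels and rewards. -/
abbrev Env (S A : Type*) := (ℕ → S → A → S → ℝ) × (ℕ → S → A → ℝ)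

variable {S A : Type*}

/-- Value function: `val H P r pol k s` is the value at the layer with `k` steps
remaining (i.e. at layer `H + 1 - k`); thus `val H P r pol H s₁` is `V_{1,π}(s₁)`. -/
noncomputable def val [Fintype S] [Fintype A] (H : ℕ) (P : ℕ → S → A → S → ℝ)
    (r : ℕ → S → A → ℝ) (pol : ℕ → S → A → ℝ) : ℕ → S → ℝ
  | 0 => fun _ => 0
  | (k + 1) => fun s => ∑ a, pol (H - k) s a *
      (r (H - k) s a + ∑ s', P (H - k) s a s' * val H P r pol k s')

/-- Each `P h (· | s,a)`, `h = 1,…,H`, is a probability distribution on `S`. -/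
def IsKernel [Fintype S] [Fintype A] (H : ℕ) (P : ℕ → S → A → S → ℝ) : Prop :=
  ∀ h ∈ Finset.Icc 1 H, ∀ s a, (∀ s', 0 ≤ P h s a s') ∧ ∑ s', P h s a s' = 1

/-- Each mean reward `r h s a`, `h = 1,…,H`, lies in `[0,1]`. -/
def IsReward (H : ℕ) (r : ℕ → S → A → ℝ) : Prop :=
  ∀ h ∈ Finset.Icc 1 H, ∀ (s : S) (a : A), 0 ≤ r h s a ∧ r h s a ≤ 1

/-- Each `pol h (· | s)`, `h = 1,…,H`, is a probability distribution on `A`. -/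
def IsPolicy [Fintype A] (H : ℕ) (pol : ℕ → S → A → ℝ) : Prop :=
  ∀ h ∈ Finset.Icc 1 H, ∀ s : S, (∀ a, 0 ≤ pol h s a) ∧ ∑ a, pol h s a = 1

/-- A layered ε-value partition of `Θ` into `K` classes. -/
def IsLayeredValuePartition [Fintype S] [Fintype A]
    (H : ℕ) (s₁ : S) (Θ : Set (Env S A)) (πstar : Env S A → (ℕ → S → A → ℝ))
    (ε : ℝ) (K : ℕ) (T : Fin K → Set (Env S A)) : Prop :=
  (∀ E ∈ Θ, ∃! k, E ∈ T k) ∧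
  (∀ k, ∃ (As : ℕ → Set (S → A → S → ℝ)) (Bs : ℕ → Set (S → A → ℝ)),
    T k = {E ∈ Θ | ∀ h ∈ Finset.Icc 1 H, E.1 h ∈ As h ∧ E.2 h ∈ Bs h}) ∧
  (∀ k, ∀ E ∈ T k, ∀ E' ∈ T k,
    val H E.1 E.2 (πstar E) H s₁ - val H E'.1 E'.2 (πstar E) H s₁ ≤ ε)

/-! Round every transition probability to a grid of `m` cells of `[0, 1]` and every mean reward to a
grid of `n` cells, and group the environments by their rounded entries; each class is a product over
layers. By the simulation lemma, two environments whose rewards differ by at most `1 / n` and whose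
kernels differ by at most `|S| / m` in `ℓ¹` have values within `H (1 / n + (|S| / m) H)` of each
other under every policy, so `n = ⌈2 H / ε⌉` and `m = ⌈2 |S| H² / ε⌉` suffice. -/

section ValueFunction

variable [Fintype S]

/-- The one-step Bellman backup of a value function `V`: the expected return of a state-action pair
with mean reward `ρ` and next-state distribution `p`. -/
def bellmanBackup (ρ : ℝ) (p V : S → ℝ) : ℝ :=
  ρ + ∑ s, p s * V s

lemma sum_mul_mem_of_convex {t : Set ℝ} (ht : Convex ℝ t) {p V : S → ℝ}
    (hp : (∀ s, 0 ≤ p s) ∧ ∑ s, p s = 1) (hV : ∀ s, V s ∈ t) : ∑ s, p s * V s ∈ t :=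
  ht.sum_mem (fun s _ => hp.1 s) hp.2 fun s _ => hV s

lemma abs_sum_mul_le {p V : S → ℝ} {D : ℝ} (hp : (∀ s, 0 ≤ p s) ∧ ∑ s, p s = 1)
    (hV : ∀ s, |V s| ≤ D) : |∑ s, p s * V s| ≤ D :=
  abs_le.2 (sum_mul_mem_of_convex (convex_Icc (-D) D) hp fun s => abs_le.1 (hV s))

lemma bellmanBackup_mem_Icc {ρ B : ℝ} {p V : S → ℝ} (hρ : ρ ∈ Set.Icc 0 1)
    (hp : (∀ s, 0 ≤ p s) ∧ ∑ s, p s = 1) (hV : ∀ s, V s ∈ Set.Icc 0 B) :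
    bellmanBackup ρ p V ∈ Set.Icc 0 (B + 1) := by
  have hsum := sum_mul_mem_of_convex (convex_Icc 0 B) hp hV
  exact ⟨add_nonneg hρ.1 hsum.1, (add_le_add hρ.2 hsum.2).trans_eq (add_comm 1 B)⟩

lemma abs_bellmanBackup_sub_le {ρ ρ' B D : ℝ} {p p' V V' : S → ℝ}
    (hp : (∀ s, 0 ≤ p s) ∧ ∑ s, p s = 1) (hV' : ∀ s, |V' s| ≤ B)
    (hD : ∀ s, |V s - V' s| ≤ D) :
    |bellmanBackup ρ p V - bellmanBackup ρ' p' V'| ≤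
      |ρ - ρ'| + (∑ s, |p s - p' s|) * B + D := by
  have split : bellmanBackup ρ p V - bellmanBackup ρ' p' V' =
      (ρ - ρ') + ∑ s, (p s - p' s) * V' s + ∑ s, p s * (V s - V' s) := by
    simp only [bellmanBackup, sub_mul, mul_sub, sum_sub_distrib]
    ring
  have kernel_term : |∑ s, (p s - p' s) * V' s| ≤ (∑ s, |p s - p' s|) * B :=
    calc |∑ s, (p s - p' s) * V' s| ≤ ∑ s, |(p s - p' s) * V' s| := abs_sum_le_sum_abs _ _
      _ ≤ ∑ s, |p s - p' s| * B := by
        gcongr with s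
        rw [abs_mul]
        gcongr
        exact hV' s
      _ = (∑ s, |p s - p' s|) * B := (sum_mul ..).symm
  rw [split]
  exact (abs_add_three _ _ _).trans (by gcongr; exact abs_sum_mul_le hp hD)

variable [Fintype A] {H : ℕ} {P P' : ℕ → S → A → S → ℝ} {r r' pol : ℕ → S → A → ℝ}

lemma val_succ (H : ℕ) (P : ℕ → S → A → S → ℝ) (r pol : ℕ → S → A → ℝ) (k : ℕ) (s : S) :
    val H P r pol (k + 1) s = ∑ a, pol (H - k) s a *
      bellmanBackup (r (H - k) s a) (P (H - k) s a) (val H P r pol k) :=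
  rfl

lemma sub_mem_Icc_of_succ_le {k : ℕ} (hk : k + 1 ≤ H) : H - k ∈ Icc 1 H :=
  mem_Icc.2 (by omega)

lemma val_mem_Icc (hP : IsKernel H P) (hr : IsReward H r) (hpol : IsPolicy H pol) {k : ℕ}
    (hk : k ≤ H) (s : S) : val H P r pol k s ∈ Set.Icc 0 (k : ℝ) := by
  induction k generalizing s with
  | zero => simp [_root_.val]
  | succ k ih =>
    have hh := sub_mem_Icc_of_succ_le hk
    rw [val_succ, Nat.cast_succ]
    exact sum_mul_mem_of_convex (convex_Icc _ _) (hpol _ hh s) fun a =>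
      bellmanBackup_mem_Icc (hr _ hh s a) (hP _ hh s a) (ih (Nat.le_of_succ_le hk))

lemma abs_val_sub_val_le (hP : IsKernel H P) (hP' : IsKernel H P') (hr' : IsReward H r')
    (hpol : IsPolicy H pol) {δ η : ℝ}
    (hδ : ∀ h ∈ Icc 1 H, ∀ s a, |r h s a - r' h s a| ≤ δ)
    (hη : ∀ h ∈ Icc 1 H, ∀ s a, ∑ s', |P h s a s' - P' h s a s'| ≤ η)
    {k : ℕ} (hk : k ≤ H) (s : S) :
    |val H P r pol k s - val H P' r' pol k s| ≤ k * (δ + η * H) := by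
  induction k generalizing s with
  | zero => simp [_root_.val]
  | succ k ih =>
    have hh := sub_mem_Icc_of_succ_le hk
    have hkH := Nat.le_of_succ_le hk
    have val_le (s' : S) : |val H P' r' pol k s'| ≤ H := by
      obtain ⟨h_nonneg, h_le⟩ := val_mem_Icc hP' hr' hpol hkH s'
      exact (abs_of_nonneg h_nonneg).trans_le (h_le.trans (Nat.cast_le.2 hkH))
    simp only [val_succ, ← sum_sub_distrib, ← mul_sub]
    refine abs_sum_mul_le (hpol _ hh s) fun a => ?_
    calc _ ≤ |r (H - k) s a - r' (H - k) s a| +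
          (∑ s', |P (H - k) s a s' - P' (H - k) s a s'|) * H + k * (δ + η * H) :=
        abs_bellmanBackup_sub_le (hP _ hh s a) val_le (ih hkH)
      _ ≤ δ + η * H + k * (δ + η * H) := by
        gcongr
        exacts [hδ _ hh s a, hη _ hh s a]
      _ = (k + 1 : ℕ) * (δ + η * H) := by
        push_cast
        ring

end ValueFunction

section Discretization

/-- The index of the cell of `[0, 1]` containing `x`, when the unit interval is cut into `n` cells
of equal length. The minimum puts `x = 1` into the last cell. -/
noncomputable def unitCell (n : ℕ) [NeZero n] (x : ℝ) : Fin n :=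
  ⟨min ⌊x * n⌋₊ (n - 1), (min_le_right _ _).trans_lt (Nat.sub_one_lt (NeZero.ne n))⟩

lemma mul_mem_Icc_unitCell (n : ℕ) [NeZero n] {x : ℝ} (hx : x ∈ Set.Icc 0 1) :
    x * n ∈ Set.Icc (unitCell n x : ℝ) (unitCell n x + 1) := by
  have hxn : 0 ≤ x * n := mul_nonneg hx.1 n.cast_nonneg
  have hn : ((n - 1 : ℕ) : ℝ) + 1 = n := by
    exact_mod_cast Nat.sub_one_add_one (NeZero.ne n)
  rw [unitCell, Nat.cast_min]
  refine ⟨(min_le_left _ _).trans (Nat.floor_le hxn), ?_⟩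
  rw [← min_add_add_right, hn]
  exact le_min (Nat.lt_floor_add_one _).le (mul_le_of_le_one_left n.cast_nonneg hx.2)

lemma abs_sub_le_of_unitCell_eq {n : ℕ} [NeZero n] {x y : ℝ} (hx : x ∈ Set.Icc 0 1)
    (hy : y ∈ Set.Icc 0 1) (hxy : unitCell n x = unitCell n y) : |x - y| ≤ 1 / n := by
  have hn : (0 : ℝ) < n := Nat.cast_pos.2 (NeZero.pos n)
  have hxn := mul_mem_Icc_unitCell n hx
  rw [hxy] at hxn
  have h_dist := Real.dist_le_of_mem_Icc hxn (mul_mem_Icc_unitCell n hy)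
  rw [Real.dist_eq, ← sub_mul, abs_mul, abs_of_pos hn, add_sub_cancel_left] at h_dist
  exact (le_div_iff₀ hn).2 h_dist

variable [Fintype S] {p p' : S → ℝ}

lemma mem_Icc_of_sum_eq_one (hp : (∀ s, 0 ≤ p s) ∧ ∑ s, p s = 1) (s : S) :
    p s ∈ Set.Icc 0 1 :=
  ⟨hp.1 s, hp.2 ▸ single_le_sum (fun x _ => hp.1 x) (mem_univ s)⟩

lemma sum_abs_sub_le_of_unitCell_eq {m : ℕ} [NeZero m]
    (hp : (∀ s, 0 ≤ p s) ∧ ∑ s, p s = 1) (hp' : (∀ s, 0 ≤ p' s) ∧ ∑ s, p' s = 1)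
    (hcell : ∀ s, unitCell m (p s) = unitCell m (p' s)) :
    ∑ s, |p s - p' s| ≤ Fintype.card S / m :=
  calc ∑ s, |p s - p' s| ≤ ∑ _s : S, (1 : ℝ) / m := by
        gcongr with s
        exact abs_sub_le_of_unitCell_eq (mem_Icc_of_sum_eq_one hp s)
          (mem_Icc_of_sum_eq_one hp' s) (hcell s)
    _ = Fintype.card S / m := by
        rw [sum_const, card_univ, nsmul_eq_mul, mul_one_div]

lemma div_natCeil_two_mul_div_le {x ε : ℝ} (hx : 0 < x) (hε : 0 < ε) :
    x / ⌈2 * x / ε⌉₊ ≤ ε / 2 := by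
  rw [div_le_comm₀ (by positivity) (by positivity)]
  exact (by field_simp : x / (ε / 2) = 2 * x / ε).trans_le (Nat.le_ceil _)

lemma natCeil_two_mul_div_le {x ε : ℝ} (hε : 0 < ε) (hεx : ε ≤ 4 * x) :
    (⌈2 * x / ε⌉₊ : ℝ) ≤ 4 * x / ε :=
  calc (⌈2 * x / ε⌉₊ : ℝ) ≤ 2 * (2 * x / ε) :=
        Nat.ceil_le_two_mul (by rw [le_div_iff₀ hε]; linarith)
    _ = 4 * x / ε := by ring

end Discretization

section LayerFiber

variable {α β : Type*}

/-- The environments of `Θ` whose kernel and reward at each layer `h = 1, …, H` are sent by `f` and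
`g` to the prescribed pair `c h`. These fibers are the classes of a layered partition. -/
def layerFiber (H : ℕ) (Θ : Set (Env S A)) (f : (S → A → S → ℝ) → α) (g : (S → A → ℝ) → β)
    (c : Icc 1 H → α × β) : Set (Env S A) :=
  {E ∈ Θ | ∀ h : Icc 1 H, (f (E.1 h), g (E.2 h)) = c h}

lemma existsUnique_mem_layerFiber {H K : ℕ} {Θ : Set (Env S A)} (f : (S → A → S → ℝ) → α)
    (g : (S → A → ℝ) → β) (e : Fin K ≃ (Icc 1 H → α × β)) {E : Env S A} (hE : E ∈ Θ) :
    ∃! k, E ∈ layerFiber H Θ f g (e k) := by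
  refine ⟨e.symm fun h => (f (E.1 h), g (E.2 h)), ⟨hE, by simp⟩, fun k hk => ?_⟩
  exact e.eq_symm_apply.2 (funext fun h => (hk.2 h).symm)

lemma layerFiber_eq_setOf_layers (H : ℕ) (Θ : Set (Env S A)) (f : (S → A → S → ℝ) → α)
    (g : (S → A → ℝ) → β) (c : Icc 1 H → α × β) :
    ∃ (As : ℕ → Set (S → A → S → ℝ)) (Bs : ℕ → Set (S → A → ℝ)),
      layerFiber H Θ f g c = {E ∈ Θ | ∀ h ∈ Icc 1 H, E.1 h ∈ As h ∧ E.2 h ∈ Bs h} := by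
  refine ⟨fun h => {p | ∀ hh : h ∈ Icc 1 H, f p = (c ⟨h, hh⟩).1},
    fun h => {ρ | ∀ hh : h ∈ Icc 1 H, g ρ = (c ⟨h, hh⟩).2}, Set.ext fun E => ?_⟩
  simp only [layerFiber, Set.mem_ofPred_eq, Prod.ext_iff, Subtype.forall]
  exact and_congr_right fun _ => forall₂_congr fun h hh => by simp only [hh, forall_true_left]

lemma isLayeredValuePartition_layerFiber [Fintype S] [Fintype A] {H K : ℕ} {s₁ : S}
    {Θ : Set (Env S A)} {π : Env S A → ℕ → S → A → ℝ} {ε : ℝ} {f : (S → A → S → ℝ) → α}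
    {g : (S → A → ℝ) → β} (e : Fin K ≃ (Icc 1 H → α × β))
    (hgap : ∀ E ∈ Θ, ∀ E' ∈ Θ,
      (∀ h ∈ Icc 1 H, f (E.1 h) = f (E'.1 h) ∧ g (E.2 h) = g (E'.2 h)) →
      val H E.1 E.2 (π E) H s₁ - val H E'.1 E'.2 (π E) H s₁ ≤ ε) :
    IsLayeredValuePartition H s₁ Θ π ε K fun k => layerFiber H Θ f g (e k) := by
  refine ⟨fun E hE => existsUnique_mem_layerFiber f g e hE,
    fun k => layerFiber_eq_setOf_layers H Θ f g (e k), ?_⟩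
  rintro k E ⟨hE, hEk⟩ E' ⟨hE', hEk'⟩
  exact hgap E hE E' hE' fun h hh =>
    Prod.ext_iff.1 ((hEk ⟨h, hh⟩).trans (hEk' ⟨h, hh⟩).symm)

end LayerFiber

section TabularPartition

variable [Fintype S] [Fintype A]

lemma natCard_layer_cells (S A : Type*) [Fintype S] [Fintype A] (H m n : ℕ) :
    Nat.card (Icc 1 H → (S → A → S → Fin m) × (S → A → Fin n)) =
      m ^ (Fintype.card S ^ 2 * Fintype.card A * H) *
        n ^ (Fintype.card S * Fintype.card A * H) := by
  simp only [Nat.card_fun, Nat.card_prod, Nat.card_eq_fintype_card, Fintype.card_fin,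
    Fintype.card_coe, Nat.card_Icc, Nat.add_sub_cancel, mul_pow, ← pow_mul]
  ring_nf

lemma abs_val_sub_val_le_of_unitCell_eq {H m n : ℕ} [NeZero m] [NeZero n]
    {P P' : ℕ → S → A → S → ℝ} {r r' pol : ℕ → S → A → ℝ} (hP : IsKernel H P)
    (hP' : IsKernel H P') (hr : IsReward H r) (hr' : IsReward H r') (hpol : IsPolicy H pol)
    (hPcell : ∀ h ∈ Icc 1 H, ∀ s a s', unitCell m (P h s a s') = unitCell m (P' h s a s'))
    (hrcell : ∀ h ∈ Icc 1 H, ∀ s a, unitCell n (r h s a) = unitCell n (r' h s a)) (s : S) :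
    |val H P r pol H s - val H P' r' pol H s| ≤ H * (1 / n + Fintype.card S / m * H) :=
  abs_val_sub_val_le hP hP' hr' hpol
    (fun h hh s a => abs_sub_le_of_unitCell_eq (hr h hh s a) (hr' h hh s a) (hrcell h hh s a))
    (fun h hh s a =>
      sum_abs_sub_le_of_unitCell_eq (hP h hh s a) (hP' h hh s a) (hPcell h hh s a)) le_rfl s

lemma isLayeredValuePartition_unitCell {H K m n : ℕ} [NeZero m] [NeZero n] {ε : ℝ}
    (hε : H * (1 / n + Fintype.card S / m * H) ≤ ε)
    (e : Fin K ≃ (Icc 1 H → (S → A → S → Fin m) × (S → A → Fin n))) (s₁ : S)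
    {π : Env S A → ℕ → S → A → ℝ}
    (hπ : ∀ E : Env S A, IsKernel H E.1 → IsReward H E.2 → IsPolicy H (π E)) :
    IsLayeredValuePartition H s₁ {E : Env S A | IsKernel H E.1 ∧ IsReward H E.2} π ε K fun k =>
      layerFiber H {E : Env S A | IsKernel H E.1 ∧ IsReward H E.2}
        (fun p s a s' => unitCell m (p s a s')) (fun ρ s a => unitCell n (ρ s a)) (e k) := by
  refine isLayeredValuePartition_layerFiber e ?_
  rintro E ⟨hP, hr⟩ E' ⟨hP', hr'⟩ hcell
  refine (le_of_abs_le (abs_val_sub_val_le_of_unitCell_eq hP hP' hr hr' (hπ E hP hr)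
    (fun h hh s a s' => ?_) (fun h hh s a => ?_) s₁)).trans hε
  · exact congrFun₃ (hcell h hh).1 s a s'
  · exact congrFun₂ (hcell h hh).2 s a

theorem layered_value_partition_all_tabular_general [Nonempty S] (H : ℕ) (ε : ℝ) (hε0 : 0 < ε)
    (hε : ε ≤ 4 * H) :
    ∃ (K : ℕ) (T : Fin K → Set (Env S A)),
      (∀ (s₁ : S) (π : Env S A → ℕ → S → A → ℝ),
        (∀ E : Env S A, IsKernel H E.1 → IsReward H E.2 → IsPolicy H (π E)) →
        IsLayeredValuePartition H s₁ {E : Env S A | IsKernel H E.1 ∧ IsReward H E.2} π ε K T) ∧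
      (K : ℝ) ≤
        (4 * (Fintype.card S : ℝ) * (H : ℝ) ^ 2 / ε) ^
            (Fintype.card S ^ 2 * Fintype.card A * H) *
          (4 * (H : ℝ) / ε) ^ (Fintype.card S * Fintype.card A * H) := by
  have hH : 1 ≤ H := Nat.one_le_iff_ne_zero.2 fun h => by simp [h, hε0.not_ge] at hε
  set c : ℝ := Fintype.card S * (H : ℝ) ^ 2 with hc
  have hH_le : (H : ℝ) ≤ c := by
    have hS : 1 ≤ Fintype.card S := Fintype.card_pos
    rw [hc]
    exact_mod_cast (Nat.le_self_pow two_ne_zero H).trans (Nat.le_mul_of_pos_left _ hS)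
  have hH0 : (0 : ℝ) < H := Nat.cast_pos.2 hH
  have hc0 : 0 < c := hH0.trans_le hH_le
  set m := ⌈2 * c / ε⌉₊
  set n := ⌈2 * H / ε⌉₊
  have : NeZero m := ⟨by positivity⟩
  have : NeZero n := ⟨by positivity⟩
  have gap_le : H * (1 / n + Fintype.card S / m * H) ≤ ε :=
    calc H * (1 / n + Fintype.card S / m * H) = H / n + c / m := by rw [hc]; ring
      _ ≤ ε / 2 + ε / 2 := add_le_add (div_natCeil_two_mul_div_le hH0 hε0)
          (div_natCeil_two_mul_div_le hc0 hε0)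
      _ = ε := add_halves ε
  refine ⟨_, _, fun s₁ π hπ => isLayeredValuePartition_unitCell gap_le
    (Finite.equivFinOfCardEq (natCard_layer_cells S A H m n)).symm s₁ hπ, ?_⟩
  rw [mul_assoc 4, ← hc]
  push_cast
  gcongr
  · exact natCeil_two_mul_div_le hε0 (hε.trans (by gcongr))
  · exact natCeil_two_mul_div_le hε0 hε

end TabularPartition

/-- the set of ALL tabular environments admits a layered ε-value
partition with at most `(16·S̄·H²/ε)^(S̄²·Ā·H) · (4H/ε)^(S̄·Ā·H)` classes. -/
theorem layered_value_partition_all_tabular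
    [Fintype S] [Fintype A] [Nonempty S] [Nonempty A]
    (H : ℕ) (hH : 1 ≤ H) (s₁ : S)
    (πstar : Env S A → (ℕ → S → A → ℝ))
    (hπstar : ∀ E : Env S A, IsKernel H E.1 → IsReward H E.2 → IsPolicy H (πstar E))
    (hopt : ∀ E : Env S A, IsKernel H E.1 → IsReward H E.2 → ∀ pol, IsPolicy H pol →
      val H E.1 E.2 pol H s₁ ≤ val H E.1 E.2 (πstar E) H s₁)
    (ε : ℝ) (hε0 : 0 < ε) (hε1 : ε ≤ 1) :
    ∃ (K : ℕ) (T : Fin K → Set (Env S A)),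
      IsLayeredValuePartition H s₁ {E : Env S A | IsKernel H E.1 ∧ IsReward H E.2}
        πstar ε K T ∧
      (K : ℝ) ≤
        (16 * (Fintype.card S : ℝ) * (H : ℝ) ^ 2 / ε) ^
            (Fintype.card S ^ 2 * Fintype.card A * H) *
          (4 * (H : ℝ) / ε) ^ (Fintype.card S * Fintype.card A * H) := by
  obtain ⟨K, T, hT, hK⟩ := layered_value_partition_all_tabular_general (S := S) (A := A) H ε hε0
    (by linarith [show (1 : ℝ) ≤ H from Nat.one_le_cast.2 hH])
  exact ⟨K, T, hT s₁ πstar hπstar, hK.trans (by gcongr; norm_num)⟩
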